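/- Let q > 2 and let u : ℝ/ℤ → ℝⁿ be an embedded, regular C¹ curve with TP(u) < ∞. Then the unit tangent u'/|u'| lies in W^{1-1/q,q} and there is a constant C > 0 depending only on ‖u'‖_{L^∞}, min_{ℝ/ℤ}|u'|, and q such that [u'/|u'|]_{W^{1-1/q,q}}^q ≤ C ( TP(u) + TP(u)^{(q-1)/(q-2)} ). -/

import Mathlib

open MeasureTheory Set Filter
open scoped RealInnerProductSpace ENNReal Topology

noncomputable section

/-- The distance on the circle `ℝ/ℤ` between the points represented by `x` and `y`. -/
def circDist (x y : ℝ) : ℝ := ‖((x - y : ℝ) : AddCircle (1 : ℝ))‖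

/-- The representative of `z` modulo `1` lying in `(-1/2, 1/2]`. -/
def wrap (z : ℝ) : ℝ := 1 / 2 - Int.fract (1 / 2 - z)

/-- Squared wedge norm `|a ∧ b|² = |a|²|b|² - ⟨a,b⟩²`. -/
def wedgeSq {n : ℕ} (a b : EuclideanSpace ℝ (Fin n)) : ℝ :=
  ‖a‖ ^ 2 * ‖b‖ ^ 2 - ⟪a, b⟫ ^ 2

/-- Wedge inner product `⟨a∧b, c∧d⟩ = ⟨a,c⟩⟨b,d⟩ - ⟨a,d⟩⟨b,c⟩`. -/
def wedgeInner {n : ℕ} (a b c d : EuclideanSpace ℝ (Fin n)) : ℝ :=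
  ⟪a, c⟫ * ⟪b, d⟫ - ⟪a, d⟫ * ⟪b, c⟫

/-- Fundamental domain for double integrals over `(ℝ/ℤ)²`. -/
def unitSq : Set (ℝ × ℝ) := Ioc (0 : ℝ) 1 ×ˢ Ioc (0 : ℝ) 1

/-- The tangent-point functional `TP` (extended-real-valued). -/
def TPe {n : ℕ} (q : ℝ) (u : ℝ → EuclideanSpace ℝ (Fin n)) : ℝ≥0∞ :=
  ENNReal.ofReal (1 / q) *
    ∫⁻ p in unitSq, ENNReal.ofReal
      (wedgeSq (deriv u p.2) (u p.1 - u p.2) ^ (q / 2) / ‖u p.1 - u p.2‖ ^ (2 * q))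

/-- The tangent-point functional `TP` (real-valued). -/
def TPr {n : ℕ} (q : ℝ) (u : ℝ → EuclideanSpace ℝ (Fin n)) : ℝ := (TPe q u).toReal

/-- The `q`-th power of the Sobolev–Slobodeckii seminorm `[f]_{W^{s,q}}` on `ℝ/ℤ`. -/
def sobSemPow {n : ℕ} (s q : ℝ) (f : ℝ → EuclideanSpace ℝ (Fin n)) : ℝ≥0∞ :=
  ∫⁻ p in unitSq, ENNReal.ofReal (‖f p.1 - f p.2‖ ^ q / circDist p.1 p.2 ^ (1 + s * q))

/-- The `W^{s,q}`-norm `‖f‖_{L^q} + [f]_{W^{s,q}}`. -/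
def Wnorm {n : ℕ} (s q : ℝ) (f : ℝ → EuclideanSpace ℝ (Fin n)) : ℝ :=
  (∫ x in Ioc (0 : ℝ) 1, ‖f x‖ ^ q) ^ (1 / q) + (sobSemPow s q f).toReal ^ (1 / q)

/-- The bi-Lipschitz constant `bil(u) = sup_{x ≢ y} |x-y|_{ℝ/ℤ}/|u(x)-u(y)|`. -/
def bil {n : ℕ} (u : ℝ → EuclideanSpace ℝ (Fin n)) : ℝ≥0∞ :=
  ⨆ (x : ℝ) (y : ℝ) (_ : circDist x y ≠ 0),
    ENNReal.ofReal (circDist x y) / ENNReal.ofReal ‖u x - u y‖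

/-- The `L^∞`-norm of the derivative of `u`. -/
def linfD {n : ℕ} (u : ℝ → EuclideanSpace ℝ (Fin n)) : ℝ≥0∞ :=
  ⨆ x : ℝ, (‖deriv u x‖₊ : ℝ≥0∞)

/-- A periodic curve is embedded if it is injective on the circle `ℝ/ℤ`. -/
def Embedded {n : ℕ} (u : ℝ → EuclideanSpace ℝ (Fin n)) : Prop :=
  ∀ x y : ℝ, u x = u y → ((x : AddCircle (1 : ℝ)) = (y : AddCircle (1 : ℝ)))

/-- A curve is regular if `min_{ℝ/ℤ} |u'| > 0`. -/
def Regular {n : ℕ} (u : ℝ → EuclideanSpace ℝ (Fin n)) : Prop :=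
  0 < ⨅ x : ℝ, ‖deriv u x‖

/-- Orthogonal projection of `b` onto the orthogonal complement of `ℝ a`. -/
def projPerp {n : ℕ} (a b : EuclideanSpace ℝ (Fin n)) : EuclideanSpace ℝ (Fin n) :=
  b - (⟪b, a⟫ / ‖a‖ ^ 2) • a

/-- The classical tangent-point functional (extended-real-valued). -/
def TPcle {n : ℕ} (q : ℝ) (u : ℝ → EuclideanSpace ℝ (Fin n)) : ℝ≥0∞ :=
  ENNReal.ofReal (1 / q) *
    ∫⁻ p in unitSq, ENNReal.ofReal
      (‖projPerp (deriv u p.2) (u p.1 - u p.2)‖ ^ q / ‖u p.1 - u p.2‖ ^ (2 * q) *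
        (‖deriv u p.1‖ * ‖deriv u p.2‖))

/-- The integrand of the functional `M(u; v, w)`. -/
def Mintegrand {n : ℕ} (q : ℝ) (u v w : ℝ → EuclideanSpace ℝ (Fin n)) (p : ℝ × ℝ) : ℝ :=
  wedgeSq (deriv u p.2) (u p.1 - u p.2) ^ ((q - 2) / 2) / ‖u p.1 - u p.2‖ ^ (2 * q) *
    wedgeInner (deriv u p.2) (u p.1 - u p.2) (deriv v p.2)
      (w p.1 - w p.2 - wrap (p.1 - p.2) • deriv w p.2)

/-- The functional `M(u; v, w)` appearing in the first variation of `TP`. -/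
def Mfun {n : ℕ} (q : ℝ) (u v w : ℝ → EuclideanSpace ℝ (Fin n)) : ℝ :=
  ∫ p in unitSq, Mintegrand q u v w p

/-- The integrand of the functional `A(u; v, w)`. -/
def Aintegrand {n : ℕ} (q : ℝ) (u v w : ℝ → EuclideanSpace ℝ (Fin n)) (p : ℝ × ℝ) : ℝ :=
  wedgeSq (deriv u p.2) (u p.1 - u p.2) ^ (q / 2) / ‖u p.1 - u p.2‖ ^ (2 * q + 2) *
    ⟪v p.1 - v p.2, w p.1 - w p.2⟫

/-- The functional `A(u; v, w)` appearing in the first variation of `TP`. -/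
def Afun {n : ℕ} (q : ℝ) (u v w : ℝ → EuclideanSpace ℝ (Fin n)) : ℝ :=
  ∫ p in unitSq, Aintegrand q u v w p

/-- The first variation `δTP(u)[w] = M(u;u,w) + M(u;w,u) - 2A(u;u,w)`. -/
def deltaTP {n : ℕ} (q : ℝ) (u w : ℝ → EuclideanSpace ℝ (Fin n)) : ℝ :=
  Mfun q u u w + Mfun q u w u - 2 * Afun q u u w

/-- The `H²` inner product on periodic curves. -/
def H2inner (v w : ℝ → EuclideanSpace ℝ (Fin 3)) : ℝ :=
  ∫ x in Ioc (0 : ℝ) 1,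
    (⟪v x, w x⟫ + ⟪deriv v x, deriv w x⟫ + ⟪deriv (deriv v) x, deriv (deriv w) x⟫)

/-- The total energy `E(u) = (κ/2)∫|u''|² + ρ TP(u)`. -/
def energyE (κ ρ q : ℝ) (u : ℝ → EuclideanSpace ℝ (Fin 3)) : ℝ :=
  κ / 2 * (∫ x in Ioc (0 : ℝ) 1, ‖deriv (deriv u) x‖ ^ 2) + ρ * TPr q u

/-- Truncation at height `c`: a number is at most `c` plus its weighted `q`-th power. -/
lemma le_add_rpow_one_sub_mul_rpow {q c D : ℝ} (hq : 1 ≤ q) (hc : 0 < c) (hD : 0 ≤ D) :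
    D ≤ c + c ^ (1 - q) * D ^ q := by
  rcases le_or_gt D c with h | h
  · have : 0 ≤ c ^ (1 - q) * D ^ q := by positivity
    linarith
  · have hD0 : 0 < D := hc.trans h
    have h1 : D ^ (1 - q) ≤ c ^ (1 - q) :=
      Real.rpow_le_rpow_of_nonpos hc h.le (by linarith)
    have h2 : D = D ^ (1 - q) * D ^ q := by
      rw [← Real.rpow_add hD0]; simp
    have h3 : D ^ (1 - q) * D ^ q ≤ c ^ (1 - q) * D ^ q := by gcongr
    linarith

lemma dist_le_add_rpow_mul_quotient {q c r D d : ℝ} (hq : 1 ≤ q) (hc : 0 < c) (hD : 0 ≤ D)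
    (hd : 0 ≤ d) (hdr : d ≤ r) (hD0 : d = 0 → D = 0) :
    D ≤ c + c ^ (1 - q) * r ^ q * (D ^ q / d ^ q) := by
  rcases hd.eq_or_lt with h | h
  · rw [hD0 h.symm]
    have : 0 ≤ r := hd.trans hdr
    positivity
  · refine (le_add_rpow_one_sub_mul_rpow hq hc hD).trans ?_
    have h1 : d ^ q ≤ r ^ q := Real.rpow_le_rpow hd hdr (by linarith)
    have h2 : 0 < d ^ q := by positivity
    have h3 : D ^ q ≤ r ^ q * (D ^ q / d ^ q) := by
      rw [← mul_div_assoc, le_div_iff₀ h2, mul_comm]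
      gcongr
    have : c ^ (1 - q) * D ^ q ≤ c ^ (1 - q) * (r ^ q * (D ^ q / d ^ q)) := by gcongr
    linarith

/-- Comparison of the mean oscillations of `g` around `g p` on two nearby sets. -/
lemma lintegral_oscillation_le {g : ℝ → ℝ} (hg : Continuous g) {A A' : Set ℝ}
    (hA : MeasurableSet A) (hA' : MeasurableSet A') {q c r : ℝ} (hq : 1 ≤ q) (hc : 0 < c)
    (hr : ∀ s ∈ A, ∀ t ∈ A', |s - t| ≤ r) (p : ℝ) :
    (∫⁻ s in A, ENNReal.ofReal |g s - g p|) * volume A' ≤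
      ((∫⁻ t in A', ENNReal.ofReal |g t - g p|) + ENNReal.ofReal c * volume A') * volume A +
        ENNReal.ofReal (c ^ (1 - q) * r ^ q) *
          ∫⁻ s in A, ∫⁻ t in A', ENNReal.ofReal (|g s - g t| ^ q / |s - t| ^ q) := by
  have hm : Measurable fun s => ENNReal.ofReal |g s - g p| := by fun_prop
  have inner : ∀ s ∈ A, ENNReal.ofReal |g s - g p| * volume A' ≤
      ((∫⁻ t in A', ENNReal.ofReal |g t - g p|) + ENNReal.ofReal c * volume A') +
        ENNReal.ofReal (c ^ (1 - q) * r ^ q) *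
          ∫⁻ t in A', ENNReal.ofReal (|g s - g t| ^ q / |s - t| ^ q) := by
    intro s hs
    calc ENNReal.ofReal |g s - g p| * volume A'
        = ∫⁻ _ in A', ENNReal.ofReal |g s - g p| := by simp
      _ ≤ ∫⁻ t in A', ((ENNReal.ofReal |g t - g p| + ENNReal.ofReal c) +
            ENNReal.ofReal (c ^ (1 - q) * r ^ q) *
              ENNReal.ofReal (|g s - g t| ^ q / |s - t| ^ q)) := by
          refine setLIntegral_mono' hA' fun t ht => ?_
          have hr0 : 0 ≤ r := (abs_nonneg _).trans (hr s hs t ht)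
          rw [← ENNReal.ofReal_mul (by positivity), ← ENNReal.ofReal_add (by positivity) hc.le,
            ← ENNReal.ofReal_add (by positivity) (by positivity)]
          refine ENNReal.ofReal_le_ofReal ?_
          have h1 := dist_le_add_rpow_mul_quotient (D := |g s - g t|) hq hc (abs_nonneg _)
            (abs_nonneg (s - t)) (hr s hs t ht) (fun h => by
              rw [abs_eq_zero, sub_eq_zero] at h; simp [h])
          have h2 := abs_sub_le (g s) (g t) (g p)
          linarith
      _ = _ := by
          rw [lintegral_add_left (by fun_prop), lintegral_add_left hm,
            lintegral_const_mul' _ _ ENNReal.ofReal_ne_top]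
          simp
  calc (∫⁻ s in A, ENNReal.ofReal |g s - g p|) * volume A'
      = ∫⁻ s in A, ENNReal.ofReal |g s - g p| * volume A' := (lintegral_mul_const _ hm).symm
    _ ≤ _ := setLIntegral_mono' hA inner
    _ = _ := by
        rw [lintegral_add_left measurable_const, lintegral_const_mul' _ _ ENNReal.ofReal_ne_top]
        simp

/-- A Morrey-type estimate along a shrinking sequence of sets: a continuous function whose
fractional seminorm is small at unit scale stays close in mean to its value at the limit point. -/
lemma lintegral_oscillation_le_of_seminorm {q : ℝ} (hq : 2 < q) :
    ∃ β : ℝ, 0 < β ∧ ∀ (g : ℝ → ℝ) (p h B : ℝ) (I : ℕ → Set ℝ), Continuous g → 0 < h → 0 ≤ B →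
      h ^ (q - 2) * B ≤ β →
      (∀ k, MeasurableSet (I k)) → (∀ k, volume (I k) = ENNReal.ofReal (h * (1 / 2) ^ k)) →
      Antitone I → (∀ k, ∀ s ∈ I k, |s - p| ≤ h * (1 / 2) ^ k) →
      (∀ k, ∀ s ∈ I k, ∀ t ∈ I k, |s - t| ≤ h * (1 / 2) ^ k) →
      (∫⁻ s in I 0, ∫⁻ t in I 0, ENNReal.ofReal (|g s - g t| ^ q / |s - t| ^ q)) ≤
        ENNReal.ofReal B →
      ∫⁻ s in I 0, ENNReal.ofReal |g s - g p| ≤ ENNReal.ofReal (h / 4) := by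
  set θ : ℝ := (1 / 2) ^ ((q - 2) / q) with hθ
  have hq0 : 0 < q := by linarith
  have hθ0 : 0 < θ := by positivity
  have hθ1 : θ < 1 := Real.rpow_lt_one (by norm_num) (by norm_num) (div_pos (by linarith) hq0)
  have hθq : θ ^ q = (1 / 2) ^ (q - 2) := by
    rw [hθ, ← Real.rpow_mul (by norm_num), div_mul_cancel₀ _ hq0.ne']
  set ε : ℝ := (1 - θ) / 16 with hε
  have hε0 : 0 < ε := by rw [hε]; linarith
  refine ⟨ε ^ q / 2, by positivity, ?_⟩
  intro g p h B I hg hh hB hβ hIm hIv hI hIp hIt hK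
  set r : ℕ → ℝ := fun k => h * (1 / 2) ^ k with hr
  have hr0 : ∀ k, 0 < r k := fun k => by simp only [hr]; positivity
  set N : ℕ → ℝ≥0∞ := fun k => ∫⁻ s in I k, ENNReal.ofReal |g s - g p| with hN
  have step : ∀ k, N k ≤ 2 * N (k + 1) + ENNReal.ofReal (r k * (2 * ε * θ ^ k)) := by
    intro k
    have hc : 0 < ε * θ ^ k := by positivity
    have h1 := lintegral_oscillation_le hg (hIm k) (hIm (k + 1)) (q := q) (r := r k)
      (by linarith) hc
      (fun s hs t ht => hIt k s hs t (hI (Nat.le_succ k) ht)) p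
    have hKk : (∫⁻ s in I k, ∫⁻ t in I (k + 1), ENNReal.ofReal (|g s - g t| ^ q / |s - t| ^ q)) ≤
        ENNReal.ofReal B :=
      ((lintegral_mono fun s => lintegral_mono_set (hI (Nat.zero_le _))).trans
        (lintegral_mono_set (hI (Nat.zero_le _)))).trans hK
    rw [hIv, hIv] at h1
    change N k * ENNReal.ofReal (r (k + 1)) ≤
      (N (k + 1) + ENNReal.ofReal (ε * θ ^ k) * ENNReal.ofReal (r (k + 1))) * ENNReal.ofReal (r k)
        + _ at h1
    have hrk : r k = 2 * r (k + 1) := by simp only [hr]; ring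
    have hbig : (ε * θ ^ k) ^ (1 - q) * r k ^ q * B ≤ r k * (ε * θ ^ k) * r (k + 1) := by
      have e1 : (ε * θ ^ k) ^ (1 - q) =
          (ε * θ ^ k) * (ε ^ q * ((1 / 2 : ℝ) ^ (q - 2)) ^ k)⁻¹ := by
        have e0 : (ε * θ ^ k) ^ q = ε ^ q * ((1 / 2 : ℝ) ^ (q - 2)) ^ k := by
          rw [Real.mul_rpow hε0.le (by positivity), ← hθq, Real.rpow_pow_comm hθ0.le]
        rw [Real.rpow_sub hc, Real.rpow_one, e0, div_eq_mul_inv]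
      have e2 : r k ^ q = r k ^ 2 * (h ^ (q - 2) * ((1 / 2 : ℝ) ^ (q - 2)) ^ k) := by
        have : r k ^ (q - 2) = h ^ (q - 2) * ((1 / 2 : ℝ) ^ (q - 2)) ^ k := by
          simp only [hr]
          rw [Real.mul_rpow hh.le (by positivity), Real.rpow_pow_comm (by norm_num)]
        rw [← this, Real.rpow_sub (hr0 k), Real.rpow_two]
        have := (hr0 k).ne'
        field_simp
      have e3 : (ε * θ ^ k) ^ (1 - q) * r k ^ q * B
          = (ε * θ ^ k) * r k ^ 2 * ((ε ^ q)⁻¹ * (h ^ (q - 2) * B)) := by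
        rw [e1, e2]; field_simp
      have e4 : (ε ^ q)⁻¹ * (h ^ (q - 2) * B) ≤ 1 / 2 := by
        rw [inv_mul_le_iff₀ (by positivity)]; linarith
      rw [e3]
      calc (ε * θ ^ k) * r k ^ 2 * ((ε ^ q)⁻¹ * (h ^ (q - 2) * B))
          ≤ (ε * θ ^ k) * r k ^ 2 * (1 / 2) := by gcongr
        _ = _ := by rw [hrk]; ring
    have h2 : N k * ENNReal.ofReal (r (k + 1)) ≤
        (2 * N (k + 1) + ENNReal.ofReal (r k * (2 * ε * θ ^ k))) * ENNReal.ofReal (r (k + 1)) := by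
      refine h1.trans ?_
      have h3 : ENNReal.ofReal ((ε * θ ^ k) ^ (1 - q) * r k ^ q) *
          (∫⁻ s in I k, ∫⁻ t in I (k + 1), ENNReal.ofReal (|g s - g t| ^ q / |s - t| ^ q)) ≤
          ENNReal.ofReal (r k * (ε * θ ^ k) * r (k + 1)) := by
        refine (mul_le_mul_right hKk _).trans ?_
        have := hr0 k
        rw [← ENNReal.ofReal_mul (by positivity)]
        exact ENNReal.ofReal_le_ofReal hbig
      refine (add_le_add_right h3 _).trans (le_of_eq ?_)
      have := hr0 k
      have := hr0 (k + 1)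
      rw [add_mul, add_mul, ← ENNReal.ofReal_mul hc.le, ← ENNReal.ofReal_mul (by positivity),
        ← ENNReal.ofReal_mul (by positivity), add_assoc, ← ENNReal.ofReal_add (by positivity)
        (by positivity)]
      congr 1
      · rw [hrk, ENNReal.ofReal_mul (by norm_num), ENNReal.ofReal_ofNat]; ring
      · congr 1; ring
    exact (ENNReal.mul_le_mul_iff_left (by simpa using hr0 (k + 1)) ENNReal.ofReal_ne_top).1 h2
  have iter : ∀ n : ℕ, N 0 ≤ 2 ^ n * N n +
      ENNReal.ofReal (h * (2 * ε) * ∑ k ∈ Finset.range n, θ ^ k) := by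
    intro n
    induction n with
    | zero => simp
    | succ n ih =>
      refine ih.trans ?_
      have hs : 0 ≤ ∑ k ∈ Finset.range n, θ ^ k := Finset.sum_nonneg fun _ _ => by positivity
      rw [Finset.sum_range_succ, mul_add, ENNReal.ofReal_add (by positivity) (by positivity)]
      calc _ ≤ 2 ^ n * (2 * N (n + 1) + ENNReal.ofReal (r n * (2 * ε * θ ^ n))) +
            ENNReal.ofReal (h * (2 * ε) * ∑ k ∈ Finset.range n, θ ^ k) := by
              gcongr; exact step n
        _ = _ := by
          have : (2 : ℝ≥0∞) ^ n * ENNReal.ofReal (r n * (2 * ε * θ ^ n)) =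
              ENNReal.ofReal (h * (2 * ε) * θ ^ n) := by
            have e : (2 : ℝ≥0∞) ^ n = ENNReal.ofReal (2 ^ n) := by
              rw [ENNReal.ofReal_pow (by norm_num), ENNReal.ofReal_ofNat]
            rw [e, ← ENNReal.ofReal_mul (by positivity)]
            congr 1
            simp only [hr]
            have : (2 : ℝ) ^ n * (1 / 2) ^ n = 1 := by rw [← mul_pow]; norm_num
            linear_combination (h * (2 * ε * θ ^ n)) * this
          rw [mul_add, this, pow_succ]
          ring
  obtain ⟨n, hn⟩ : ∃ n : ℕ, ∀ s, |s - p| ≤ r n → |g s - g p| ≤ 1 / 16 := by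
    obtain ⟨δ, hδ, hδ'⟩ := Metric.continuousAt_iff.1 (hg.continuousAt (x := p)) (1 / 16) (by norm_num)
    obtain ⟨n, hn⟩ := exists_pow_lt_of_lt_one (div_pos hδ hh) (by norm_num : (1 / 2 : ℝ) < 1)
    refine ⟨n, fun s hs => (hδ' (x := s) ?_).le⟩
    rw [lt_div_iff₀ hh] at hn
    rw [Real.dist_eq]
    refine hs.trans_lt ?_
    simp only [hr]; linarith
  have hNn : 2 ^ n * N n ≤ ENNReal.ofReal (h / 16) := by
    have : N n ≤ ENNReal.ofReal (1 / 16) * ENNReal.ofReal (r n) := by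
      rw [← hIv n, ← setLIntegral_const]
      exact setLIntegral_mono' (hIm n) fun s hs => ENNReal.ofReal_le_ofReal (hn s (hIp n s hs))
    refine (mul_le_mul_right this _).trans (le_of_eq ?_)
    have e : (2 : ℝ≥0∞) ^ n = ENNReal.ofReal (2 ^ n) := by
      rw [ENNReal.ofReal_pow (by norm_num), ENNReal.ofReal_ofNat]
    rw [e, ← ENNReal.ofReal_mul (by positivity), ← ENNReal.ofReal_mul (by positivity)]
    congr 1
    simp only [hr]
    have : (2 : ℝ) ^ n * (1 / 2) ^ n = 1 := by rw [← mul_pow]; norm_num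
    linear_combination (h / 16) * this
  refine (iter n).trans ((add_le_add_left hNn _).trans ?_)
  have hs : 0 ≤ ∑ k ∈ Finset.range n, θ ^ k := Finset.sum_nonneg fun _ _ => by positivity
  rw [← ENNReal.ofReal_add (by positivity) (by positivity)]
  refine ENNReal.ofReal_le_ofReal ?_
  have hgs : (1 - θ) * ∑ k ∈ Finset.range n, θ ^ k ≤ 1 := by
    rw [mul_neg_geom_sum]
    have : 0 < θ ^ n := by positivity
    linarith
  have : h * (2 * ε) * ∑ k ∈ Finset.range n, θ ^ k
      = h / 8 * ((1 - θ) * ∑ k ∈ Finset.range n, θ ^ k) := by rw [hε]; ring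
  rw [this]
  have := mul_le_mul_of_nonneg_left hgs (by positivity : 0 ≤ h / 8)
  linarith

/-- Scale-invariant Morrey estimate on an interval `[a, b]`. -/
lemma abs_sub_le_half_of_seminorm {q : ℝ} (hq : 2 < q) :
    ∃ β : ℝ, 0 < β ∧ ∀ (g : ℝ → ℝ) (a b B : ℝ), Continuous g → a < b → 0 ≤ B →
      (b - a) ^ (q - 2) * B ≤ β →
      (∫⁻ s in Ioc a b, ∫⁻ t in Ioc a b, ENNReal.ofReal (|g s - g t| ^ q / |s - t| ^ q)) ≤
        ENNReal.ofReal B →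
      |g a - g b| ≤ 1 / 2 := by
  obtain ⟨β, hβ, H⟩ := lintegral_oscillation_le_of_seminorm hq
  refine ⟨β, hβ, fun g a b B hg hab hB hsmall hK => ?_⟩
  have hh : 0 < b - a := by linarith
  have hpow : ∀ k : ℕ, (0 : ℝ) < (b - a) * (1 / 2) ^ k := fun k => by positivity
  have hanti : Antitone fun k : ℕ => (b - a) * (1 / 2) ^ k := fun i j hij =>
    mul_le_mul_of_nonneg_left (pow_le_pow_of_le_one (by norm_num) (by norm_num) hij) hh.le
  have h1 := H g a (b - a) B (fun k => Ioc a (a + (b - a) * (1 / 2) ^ k)) hg hh hB hsmall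
    (fun k => measurableSet_Ioc) (fun k => by simp)
    (fun i j hij => Ioc_subset_Ioc_right (by have := hanti hij; simp only at this; linarith))
    (fun k s hs => by rw [abs_le]; constructor <;> linarith [hs.1, hs.2, hpow k])
    (fun k s hs t ht => by rw [abs_le]; constructor <;> linarith [hs.1, hs.2, ht.1, ht.2])
    (by simpa using hK)
  have h2 := H g b (b - a) B (fun k => Ioc (b - (b - a) * (1 / 2) ^ k) b) hg hh hB hsmall
    (fun k => measurableSet_Ioc) (fun k => by simp)
    (fun i j hij => Ioc_subset_Ioc_left (by have := hanti hij; simp only at this; linarith))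
    (fun k s hs => by rw [abs_le]; constructor <;> linarith [hs.1, hs.2, hpow k])
    (fun k s hs t ht => by rw [abs_le]; constructor <;> linarith [hs.1, hs.2, ht.1, ht.2])
    (by simpa using hK)
  simp only [pow_zero, mul_one, add_sub_cancel, sub_sub_cancel] at h1 h2
  have h3 : ENNReal.ofReal (|g a - g b| * (b - a)) ≤ ENNReal.ofReal (1 / 2 * (b - a)) :=
    calc ENNReal.ofReal (|g a - g b| * (b - a))
        = ∫⁻ _ in Ioc a b, ENNReal.ofReal |g a - g b| := by
          rw [setLIntegral_const, Real.volume_Ioc, ENNReal.ofReal_mul (abs_nonneg _)]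
      _ ≤ ∫⁻ s in Ioc a b, (ENNReal.ofReal |g s - g a| + ENNReal.ofReal |g s - g b|) := by
          refine lintegral_mono fun s => ?_
          rw [← ENNReal.ofReal_add (abs_nonneg _) (abs_nonneg _)]
          refine ENNReal.ofReal_le_ofReal ?_
          have := abs_sub_le (g a) (g s) (g b)
          rwa [abs_sub_comm (g a) (g s)] at this
      _ ≤ _ := by
          rw [lintegral_add_left (by fun_prop)]
          refine (add_le_add h1 h2).trans ?_
          rw [← ENNReal.ofReal_add (by positivity) (by positivity)]
          exact ENNReal.ofReal_le_ofReal (by linarith)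
  rw [ENNReal.ofReal_le_ofReal_iff (by positivity)] at h3
  exact le_of_mul_le_mul_right h3 hh

/-- The integral of a periodic function over a period does not depend on the period. -/
lemma setLIntegral_Ioc_add_one_eq {F : ℝ → ℝ≥0∞} (hF : Function.Periodic F 1) (a b : ℝ) :
    ∫⁻ x in Ioc a (a + 1), F x = ∫⁻ x in Ioc b (b + 1), F x := by
  have : VAddInvariantMeasure (AddSubgroup.zmultiples (1 : ℝ)) ℝ volume :=
    ⟨fun c s _ => measure_preimage_add _ _ _⟩
  exact IsAddFundamentalDomain.setLIntegral_eq (G := AddSubgroup.zmultiples (1 : ℝ))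
    (isAddFundamentalDomain_Ioc one_pos a) (isAddFundamentalDomain_Ioc one_pos b) F
    hF.map_vadd_zmultiples

lemma setLIntegral_unitSq_eq {F : ℝ × ℝ → ℝ≥0∞} (hF : Measurable F)
    (h1 : ∀ x y, F (x + 1, y) = F (x, y)) (h2 : ∀ x y, F (x, y + 1) = F (x, y)) (a : ℝ) :
    ∫⁻ p in unitSq, F p = ∫⁻ x in Ioc a (a + 1), ∫⁻ y in Ioc a (a + 1), F (x, y) := by
  have e1 : ∀ x, ∫⁻ y in Ioc a (a + 1), F (x, y) = ∫⁻ y in Ioc (0 : ℝ) (0 + 1), F (x, y) :=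
    fun x => setLIntegral_Ioc_add_one_eq (F := fun y => F (x, y)) (h2 x) a 0
  simp_rw [e1]
  rw [setLIntegral_Ioc_add_one_eq (fun x => by simp [h1]) a 0, unitSq, Measure.volume_eq_prod,
    setLIntegral_prod _ hF.aemeasurable]
  simp

lemma circDist_nonneg (x y : ℝ) : 0 ≤ circDist x y := norm_nonneg _

lemma circDist_le_abs_sub (x y : ℝ) : circDist x y ≤ |x - y| := by
  rw [circDist, UnitAddCircle.norm_eq]
  simpa using round_le (x - y) 0

lemma exists_circDist_eq (x y : ℝ) : ∃ k : ℤ, circDist x y = |x - (y + k)| :=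
  ⟨round (x - y), by rw [circDist, UnitAddCircle.norm_eq]; congr 1; ring⟩

lemma circDist_le_one (x y : ℝ) : circDist x y ≤ 1 := by
  rw [circDist, UnitAddCircle.norm_eq]
  exact (abs_sub_round _).trans (by norm_num)

lemma circDist_eq_abs_sub {x y : ℝ} (h : |x - y| ≤ 1 / 2) : circDist x y = |x - y| := by
  rw [circDist, AddCircle.norm_coe_eq_abs_iff _ one_ne_zero]
  simpa using h

lemma circDist_comm (x y : ℝ) : circDist x y = circDist y x := by
  rw [circDist, circDist, ← norm_neg, ← AddCircle.coe_neg, neg_sub]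

lemma circDist_add_one_right (x y : ℝ) : circDist x (y + 1) = circDist x y := by
  have : ((1 : ℝ) : AddCircle (1 : ℝ)) = 0 := AddCircle.coe_period 1
  simp only [circDist, AddCircle.coe_sub, AddCircle.coe_add, this, add_zero]

lemma circDist_add_one_left (x y : ℝ) : circDist (x + 1) y = circDist x y := by
  rw [circDist_comm, circDist_add_one_right, circDist_comm]

lemma continuous_circDist : Continuous fun p : ℝ × ℝ => circDist p.1 p.2 :=
  continuous_norm.comp ((AddCircle.continuous_mk' 1).comp (by fun_prop))

lemma periodic_add_intCast {E : Type*} {f : ℝ → E} (hf : Function.Periodic f 1) (x : ℝ) (k : ℤ) :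
    f (x + k) = f x := by
  simpa using hf.int_mul k x

lemma eq_of_circDist_eq_zero {E : Type*} {f : ℝ → E} (hf : Function.Periodic f 1) {x y : ℝ}
    (h : circDist x y = 0) : f x = f y := by
  obtain ⟨k, hk⟩ := exists_circDist_eq x y
  rw [h, eq_comm, abs_eq_zero, sub_eq_zero] at hk
  rw [hk, periodic_add_intCast hf]

/-- The off-diagonal part of the kernel `|x - y|^{-q}` on the circle. -/
lemma lintegral_circDist_rpow_le {q δ : ℝ} (hq : 1 < q) (hδ : 0 < δ) (x : ℝ) :
    ∫⁻ y in Ioc (0 : ℝ) 1, (Ioi δ).indicator (fun r => ENNReal.ofReal (r ^ (-q))) (circDist x y) ≤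
      ENNReal.ofReal (2 / (q - 1) * δ ^ (1 - q)) := by
  set ψ : ℝ → ℝ≥0∞ := (Ioi δ).indicator fun r => ENNReal.ofReal (r ^ (-q)) with hψ
  have hψm : Measurable ψ := by
    refine Measurable.indicator ?_ measurableSet_Ioi
    fun_prop
  have hper : Function.Periodic (fun y => ψ (circDist x y)) 1 := fun y => by
    simp only [circDist_add_one_right]
  have h0 := setLIntegral_Ioc_add_one_eq hper 0 (x - 1 / 2)
  rw [zero_add] at h0
  have hψi : ∫⁻ y, ψ y = ENNReal.ofReal (1 / (q - 1) * δ ^ (1 - q)) := by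
    rw [hψ, lintegral_indicator measurableSet_Ioi, ← ofReal_integral_eq_lintegral_ofReal
      (integrableOn_Ioi_rpow_of_lt (by linarith) hδ)
      (ae_restrict_of_forall_mem measurableSet_Ioi fun y hy =>
        Real.rpow_nonneg (hδ.le.trans (le_of_lt hy)) _), integral_Ioi_rpow_of_lt (by linarith) hδ]
    congr 1
    rw [show -q + 1 = -(q - 1) by ring, neg_div_neg_eq, show 1 - q = -(q - 1) by ring]
    ring
  calc ∫⁻ y in Ioc (0 : ℝ) 1, ψ (circDist x y)
      = ∫⁻ y in Ioc (x - 1 / 2) (x - 1 / 2 + 1), ψ (circDist x y) := h0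
    _ ≤ ∫⁻ y in Ioc (x - 1 / 2) (x - 1 / 2 + 1), ψ |x - y| := by
        refine setLIntegral_mono' measurableSet_Ioc fun y hy => le_of_eq ?_
        rw [circDist_eq_abs_sub]
        rw [abs_le]; constructor <;> linarith [hy.1, hy.2]
    _ ≤ ∫⁻ y, ψ |x - y| := setLIntegral_le_lintegral _ _
    _ = ∫⁻ y, ψ |y| := lintegral_sub_left_eq_self (fun y => ψ |y|) x
    _ ≤ ∫⁻ y, (ψ y + ψ (-y)) := by
        refine lintegral_mono fun y => ?_
        rcases abs_cases y with ⟨h, -⟩ | ⟨h, -⟩ <;> simp [h]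
    _ = _ := by
        rw [lintegral_add_left hψm, lintegral_neg_eq_self, hψi,
          ← ENNReal.ofReal_add, ← two_mul]
        · congr 1; ring
        all_goals
          have : 0 < q - 1 := by linarith
          positivity

lemma inner_nonneg_of_seminorm_small {q : ℝ} (hq : 2 < q) :
    ∃ β : ℝ, 0 < β ∧ ∀ (n : ℕ) (f : ℝ → EuclideanSpace ℝ (Fin n)) (a b B : ℝ), Continuous f →
      (∀ x, ‖f x‖ = 1) → a < b → 0 ≤ B → (b - a) ^ (q - 2) * B ≤ β →
      (∫⁻ s in Ioc a b, ∫⁻ t in Ioc a b,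
        ENNReal.ofReal ((‖f s - f t‖ * ‖f s + f t‖) ^ q / |s - t| ^ q)) ≤ ENNReal.ofReal B →
      0 ≤ ⟪f a, f b⟫ := by
  obtain ⟨β, hβ, H⟩ := abs_sub_le_half_of_seminorm hq
  refine ⟨β, hβ, fun n f a b B hf hf1 hab hB hsmall hK => ?_⟩
  have hself : ⟪f a, f a⟫ = 1 := by rw [real_inner_self_eq_norm_sq, hf1]; norm_num
  have hne : ∀ c ∈ Icc a b, ⟪f a, f c⟫ ≠ 0 := by
    intro c hc h0
    rcases hc.1.eq_or_lt with h | h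
    · rw [← h, hself] at h0; norm_num at h0
    have h1 := H (fun s => ⟪f a, f s⟫ ^ 2) a c B (by fun_prop) h hB
      ((mul_le_mul_of_nonneg_right (Real.rpow_le_rpow (by linarith) (by linarith [hc.2])
        (by linarith)) hB).trans hsmall) ?_
    · simp only [hself, h0] at h1; norm_num at h1
    refine le_trans ?_ hK
    have hsub : Ioc a c ⊆ Ioc a b := Ioc_subset_Ioc_right hc.2
    refine (lintegral_mono_set hsub).trans (lintegral_mono fun s => ?_)
    refine (lintegral_mono_set hsub).trans (lintegral_mono fun t => ?_)
    refine ENNReal.ofReal_le_ofReal ?_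
    have e : ⟪f a, f s⟫ ^ 2 - ⟪f a, f t⟫ ^ 2 = ⟪f a, f s - f t⟫ * ⟪f a, f s + f t⟫ := by
      rw [inner_sub_right, inner_add_right]; ring
    have h2 := abs_real_inner_le_norm (f a) (f s - f t)
    have h3 := abs_real_inner_le_norm (f a) (f s + f t)
    rw [hf1, one_mul] at h2 h3
    rw [e, abs_mul]
    gcongr
  by_contra! hlt
  obtain ⟨c, hc, hc0⟩ := intermediate_value_Icc' hab.le
    (f := fun s => ⟪f a, f s⟫) (by fun_prop) ⟨hlt.le, by simp only [hself]; norm_num⟩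
  exact hne c hc hc0

lemma norm_sub_le_norm_sub_mul_norm_add {E : Type*} [NormedAddCommGroup E] [InnerProductSpace ℝ E]
    {a b : E} (ha : ‖a‖ = 1) (hb : ‖b‖ = 1) (h : 0 ≤ ⟪a, b⟫) :
    ‖a - b‖ ≤ ‖a - b‖ * ‖a + b‖ := by
  refine le_mul_of_one_le_right (norm_nonneg _) ?_
  have := norm_add_sq_real a b
  rw [ha, hb] at this
  nlinarith [norm_nonneg (a + b)]

/-- A continuous periodic field of unit vectors cannot reverse its direction on short intervals
when the field of lines it spans has finite fractional seminorm. -/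
lemma norm_sub_le_of_circDist_small {q : ℝ} (hq : 2 < q) :
    ∃ β : ℝ, 0 < β ∧ ∀ (n : ℕ) (f : ℝ → EuclideanSpace ℝ (Fin n)) (B : ℝ), Continuous f →
      Function.Periodic f 1 → (∀ x, ‖f x‖ = 1) → 0 ≤ B →
      (∫⁻ p in unitSq, ENNReal.ofReal
        ((‖f p.1 - f p.2‖ * ‖f p.1 + f p.2‖) ^ q / circDist p.1 p.2 ^ q)) ≤ ENNReal.ofReal B →
      ∀ x y, circDist x y ^ (q - 2) * B ≤ β → ‖f x - f y‖ ≤ ‖f x - f y‖ * ‖f x + f y‖ := by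
  obtain ⟨β, hβ, H⟩ := inner_nonneg_of_seminorm_small hq
  refine ⟨β, hβ, fun n f B hf hper hf1 hB hK => ?_⟩
  have key : ∀ a b, a < b → b - a ≤ 1 → (b - a) ^ (q - 2) * B ≤ β → 0 ≤ ⟪f a, f b⟫ := by
    intro a b hab hab1 hsmall
    refine H n f a b B hf hf1 hab hB hsmall (le_trans ?_ hK)
    rw [setLIntegral_unitSq_eq ?_ ?_ ?_ a]
    · have hsub : Ioc a b ⊆ Ioc a (a + 1) := Ioc_subset_Ioc_right (by linarith)
      refine (lintegral_mono_set hsub).trans (lintegral_mono fun s => ?_)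
      refine (lintegral_mono_set hsub).trans (lintegral_mono fun t => ?_)
      refine ENNReal.ofReal_le_ofReal ?_
      rcases (circDist_nonneg s t).eq_or_lt with h | h
      · rw [eq_of_circDist_eq_zero hper h.symm]
        simp [Real.zero_rpow (by linarith : q ≠ 0)]
      · have := circDist_le_abs_sub s t
        have hpos : 0 < circDist s t ^ q := by positivity
        gcongr
    · have := continuous_circDist
      fun_prop
    · intro x y; simp only [hper x, circDist_add_one_left]
    · intro x y; simp only [hper y, circDist_add_one_right]
  intro x y hxy
  obtain ⟨k, hk⟩ := exists_circDist_eq x y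
  have hle := circDist_le_one x y
  refine norm_sub_le_norm_sub_mul_norm_add (hf1 x) (hf1 y) ?_
  rw [← periodic_add_intCast hper y k]
  rw [hk] at hxy hle
  rcases lt_trichotomy x (y + k) with h | h | h
  · rw [abs_sub_comm, abs_of_pos (by linarith)] at hxy hle
    exact key _ _ h hle hxy
  · rw [h, real_inner_self_eq_norm_sq]; positivity
  · rw [abs_of_pos (by linarith)] at hxy hle
    rw [real_inner_comm]
    exact key _ _ h hle hxy

/-- The seminorm of a continuous unit vector field is controlled by that of its line field. -/
lemma lintegral_seminorm_le_of_line_field {q : ℝ} (hq : 2 < q) :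
    ∃ c : ℝ, 0 < c ∧ ∀ (n : ℕ) (f : ℝ → EuclideanSpace ℝ (Fin n)) (B : ℝ), Continuous f →
      Function.Periodic f 1 → (∀ x, ‖f x‖ = 1) → 0 ≤ B →
      (∫⁻ p in unitSq, ENNReal.ofReal
        ((‖f p.1 - f p.2‖ * ‖f p.1 + f p.2‖) ^ q / circDist p.1 p.2 ^ q)) ≤ ENNReal.ofReal B →
      (∫⁻ p in unitSq, ENNReal.ofReal (‖f p.1 - f p.2‖ ^ q / circDist p.1 p.2 ^ q)) ≤
        ENNReal.ofReal (B + c * B ^ ((q - 1) / (q - 2))) := by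
  obtain ⟨β, hβ, H⟩ := norm_sub_le_of_circDist_small hq
  have hq1 : 0 < q - 1 := by linarith
  have hq2 : 0 < q - 2 := by linarith
  set e : ℝ := (q - 1) / (q - 2) with he
  refine ⟨2 ^ q * (2 / (q - 1) * (β ^ e)⁻¹), by positivity,
    fun n f B hf hper hf1 hB hK => ?_⟩
  have hS := H n f B hf hper hf1 hB hK
  have hcd := continuous_circDist
  rcases hB.eq_or_lt with h0 | hBpos
  · have hB' : B + 2 ^ q * (2 / (q - 1) * (β ^ e)⁻¹) * B ^ e = B := by
      rw [← h0, Real.zero_rpow (div_pos hq1 hq2).ne']; simp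
    rw [hB']
    refine le_trans (lintegral_mono fun p => ENNReal.ofReal_le_ofReal ?_) hK
    have := hS p.1 p.2 (by rw [← h0]; simpa using hβ.le)
    have := circDist_nonneg p.1 p.2
    gcongr
  set δ : ℝ := (β / B) ^ (1 / (q - 2)) with hδ
  have hδ0 : 0 < δ := by positivity
  have hδq : δ ^ (q - 2) = β / B := by
    rw [hδ, ← Real.rpow_mul (by positivity), one_div_mul_cancel hq2.ne', Real.rpow_one]
  set ψ : ℝ → ℝ≥0∞ := (Ioi δ).indicator fun r => ENNReal.ofReal (r ^ (-q)) with hψ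
  have hψm : Measurable ψ := by
    refine Measurable.indicator ?_ measurableSet_Ioi
    fun_prop
  have hpt : ∀ p : ℝ × ℝ, ENNReal.ofReal (‖f p.1 - f p.2‖ ^ q / circDist p.1 p.2 ^ q) ≤
      ENNReal.ofReal ((‖f p.1 - f p.2‖ * ‖f p.1 + f p.2‖) ^ q / circDist p.1 p.2 ^ q) +
        ENNReal.ofReal (2 ^ q) * ψ (circDist p.1 p.2) := by
    intro p
    have hd := circDist_nonneg p.1 p.2
    rcases le_or_gt (circDist p.1 p.2) δ with h | h
    · refine le_trans (ENNReal.ofReal_le_ofReal ?_) le_self_add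
      have h1 : circDist p.1 p.2 ^ (q - 2) * B ≤ β := by
        rw [← le_div_iff₀ hBpos, ← hδq]
        exact Real.rpow_le_rpow hd h hq2.le
      have := hS p.1 p.2 h1
      gcongr
    · refine le_trans ?_ le_add_self
      rw [hψ, indicator_of_mem (mem_Ioi.2 h), ← ENNReal.ofReal_mul (by positivity),
        Real.rpow_neg hd, ← div_eq_mul_inv]
      refine ENNReal.ofReal_le_ofReal ?_
      have := norm_sub_le (f p.1) (f p.2)
      rw [hf1, hf1] at this
      gcongr
      linarith
  have htail : ∫⁻ p in unitSq, ψ (circDist p.1 p.2) ≤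
      ENNReal.ofReal (2 / (q - 1) * δ ^ (1 - q)) := by
    have hm : Measurable fun p : ℝ × ℝ => ψ (circDist p.1 p.2) := hψm.comp hcd.measurable
    rw [unitSq, Measure.volume_eq_prod, setLIntegral_prod _ hm.aemeasurable]
    refine (lintegral_mono fun x =>
      lintegral_circDist_rpow_le (by linarith : 1 < q) hδ0 x).trans (le_of_eq ?_)
    simp
  have hδe : δ ^ (1 - q) = (β ^ e)⁻¹ * B ^ e := by
    rw [hδ, ← Real.rpow_mul (by positivity), show 1 / (q - 2) * (1 - q) = -e by
      rw [he]; field_simp; ring, Real.rpow_neg (by positivity),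
      Real.div_rpow hβ.le hB, inv_div, div_eq_mul_inv, mul_comm]
  calc _ ≤ ∫⁻ p in unitSq, (ENNReal.ofReal
          ((‖f p.1 - f p.2‖ * ‖f p.1 + f p.2‖) ^ q / circDist p.1 p.2 ^ q) +
          ENNReal.ofReal (2 ^ q) * ψ (circDist p.1 p.2)) := lintegral_mono hpt
    _ ≤ ENNReal.ofReal B + ENNReal.ofReal (2 ^ q) *
          ENNReal.ofReal (2 / (q - 1) * δ ^ (1 - q)) := by
        rw [lintegral_add_left (by fun_prop), lintegral_const_mul' _ _ ENNReal.ofReal_ne_top]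
        gcongr
    _ = _ := by
        rw [← ENNReal.ofReal_mul (by positivity), ← ENNReal.ofReal_add hB (by positivity), hδe]
        congr 1; ring

lemma norm_sub_mul_norm_add_le {E : Type*} [NormedAddCommGroup E] [InnerProductSpace ℝ E]
    {a b : E} (ha : ‖a‖ = 1) (hb : ‖b‖ = 1) (t : ℝ) :
    ‖a - b‖ * ‖a + b‖ ≤ 2 * ‖a - t • b‖ := by
  refine le_of_sq_le_sq ?_ (by positivity)
  rw [mul_pow, mul_pow, norm_sub_sq_real, norm_add_sq_real, norm_sub_sq_real, inner_smul_right,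
    norm_smul, ha, hb, mul_one, Real.norm_eq_abs, sq_abs]
  nlinarith [sq_nonneg (t - ⟪a, b⟫)]

lemma norm_sub_inner_smul {E : Type*} [NormedAddCommGroup E] [InnerProductSpace ℝ E]
    {a b : E} (ha : ‖a‖ = 1) (hb : ‖b‖ = 1) :
    ‖a - ⟪a, b⟫ • b‖ = √(1 - ⟪a, b⟫ ^ 2) := by
  rw [← Real.sqrt_sq (norm_nonneg _), norm_sub_sq_real, inner_smul_right, norm_smul, ha, hb,
    Real.norm_eq_abs, mul_one, sq_abs]
  congr 1
  ring

/-- Triangle inequality for the sine distance between lines. -/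
lemma norm_sub_mul_norm_add_le_sqrt {E : Type*} [NormedAddCommGroup E] [InnerProductSpace ℝ E]
    {a b w : E} (ha : ‖a‖ = 1) (hb : ‖b‖ = 1) (hw : ‖w‖ = 1) :
    ‖a - b‖ * ‖a + b‖ ≤ 2 * (√(1 - ⟪a, w⟫ ^ 2) + √(1 - ⟪b, w⟫ ^ 2)) := by
  refine (norm_sub_mul_norm_add_le ha hb (⟪a, w⟫ * ⟪w, b⟫)).trans ?_
  rw [← norm_sub_inner_smul ha hw, real_inner_comm w b, ← norm_sub_inner_smul hw hb]
  have h1 : a - (⟪a, w⟫ * ⟪w, b⟫) • b = (a - ⟪a, w⟫ • w) + ⟪a, w⟫ • (w - ⟪w, b⟫ • b) := by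
    rw [smul_sub, smul_smul]; abel
  have h2 : |⟪a, w⟫| ≤ 1 := by simpa [ha, hw] using abs_real_inner_le_norm a w
  have h3 := norm_add_le (a - ⟪a, w⟫ • w) (⟪a, w⟫ • (w - ⟪w, b⟫ • b))
  rw [norm_smul, Real.norm_eq_abs] at h3
  have h4 := mul_le_mul_of_nonneg_right h2 (norm_nonneg (w - ⟪w, b⟫ • b))
  rw [h1]
  linarith

lemma wedgeSq_nonneg {n : ℕ} (a b : EuclideanSpace ℝ (Fin n)) : 0 ≤ wedgeSq a b := by
  have h := abs_real_inner_le_norm a b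
  have := pow_le_pow_left₀ (abs_nonneg _) h 2
  rw [sq_abs, mul_pow] at this
  rw [wedgeSq]; linarith

lemma sqrt_one_sub_inner_sq {n : ℕ} {v D : EuclideanSpace ℝ (Fin n)} (hv : v ≠ 0) (hD : D ≠ 0) :
    √(1 - ⟪‖v‖⁻¹ • v, ‖D‖⁻¹ • D⟫ ^ 2) = √(wedgeSq v D) / (‖v‖ * ‖D‖) := by
  have hv' := norm_pos_iff.2 hv
  have hD' := norm_pos_iff.2 hD
  rw [← Real.sqrt_sq (by positivity : 0 ≤ ‖v‖ * ‖D‖), ← Real.sqrt_div (wedgeSq_nonneg v D)]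
  congr 1
  rw [real_inner_smul_left, real_inner_smul_right, wedgeSq]
  field_simp

lemma add_rpow_le_two_rpow_mul {a b q : ℝ} (ha : 0 ≤ a) (hb : 0 ≤ b) (hq : 0 ≤ q) :
    (a + b) ^ q ≤ 2 ^ q * (a ^ q + b ^ q) := by
  wlog hab : a ≤ b generalizing a b
  · rw [add_comm a b, add_comm (a ^ q)]
    exact this hb ha (le_of_not_ge hab)
  calc (a + b) ^ q ≤ (2 * b) ^ q := Real.rpow_le_rpow (by positivity) (by linarith) hq
    _ = 2 ^ q * b ^ q := Real.mul_rpow (by norm_num) hb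
    _ ≤ _ := by
      have : 0 ≤ a ^ q := by positivity
      gcongr
      linarith

/-- The angle between two tangent lines is controlled by the tangent-point integrand. -/
lemma chord_quotient_le {n : ℕ} {q lam Λ d : ℝ} (hq : 0 < q) (hlam : 0 < lam) (hΛ : 0 < Λ)
    {v v' D : EuclideanSpace ℝ (Fin n)} (hv : lam ≤ ‖v‖) (hv' : lam ≤ ‖v'‖) (hD : D ≠ 0)
    (hDd : ‖D‖ ≤ Λ * d) :
    (‖‖v‖⁻¹ • v - ‖v'‖⁻¹ • v'‖ * ‖‖v‖⁻¹ • v + ‖v'‖⁻¹ • v'‖) ^ q / d ^ q ≤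
      (2 * Λ / lam) ^ q * 2 ^ q * (wedgeSq v D ^ (q / 2) / ‖D‖ ^ (2 * q) +
        wedgeSq v' D ^ (q / 2) / ‖D‖ ^ (2 * q)) := by
  have hD' := norm_pos_iff.2 hD
  have hd : 0 < d := pos_of_mul_pos_right (hD'.trans_le hDd) hΛ.le
  have unit : ∀ w : EuclideanSpace ℝ (Fin n), w ≠ 0 → ‖‖w‖⁻¹ • w‖ = 1 := fun w hw => by
    rw [norm_smul, norm_inv, norm_norm, inv_mul_cancel₀ (norm_ne_zero_iff.2 hw)]
  have hv0 : v ≠ 0 := norm_pos_iff.1 (hlam.trans_le hv)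
  have hv0' : v' ≠ 0 := norm_pos_iff.1 (hlam.trans_le hv')
  have h1 := norm_sub_mul_norm_add_le_sqrt (unit v hv0) (unit v' hv0') (unit D hD)
  rw [sqrt_one_sub_inner_sq hv0 hD, sqrt_one_sub_inner_sq hv0' hD] at h1
  have hterm : ∀ w : EuclideanSpace ℝ (Fin n), lam ≤ ‖w‖ →
      √(wedgeSq w D) / (‖w‖ * ‖D‖) ≤ Λ / lam * d * (√(wedgeSq w D) / ‖D‖ ^ 2) := by
    intro w hw
    calc √(wedgeSq w D) / (‖w‖ * ‖D‖) ≤ √(wedgeSq w D) / (lam * ‖D‖) := by gcongr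
      _ = ‖D‖ / lam * (√(wedgeSq w D) / ‖D‖ ^ 2) := by field_simp
      _ ≤ Λ * d / lam * (√(wedgeSq w D) / ‖D‖ ^ 2) := by gcongr
      _ = _ := by ring
  have hpow : ∀ w : EuclideanSpace ℝ (Fin n),
      (√(wedgeSq w D) / ‖D‖ ^ 2) ^ q = wedgeSq w D ^ (q / 2) / ‖D‖ ^ (2 * q) := by
    intro w
    rw [Real.div_rpow (Real.sqrt_nonneg _) (by positivity), Real.sqrt_eq_rpow,
      ← Real.rpow_mul (wedgeSq_nonneg w D), Real.rpow_mul (norm_nonneg D), Real.rpow_two]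
    congr 2
    ring
  rw [div_le_iff₀ (by positivity)]
  calc _ ≤ (2 * Λ / lam * d * (√(wedgeSq v D) / ‖D‖ ^ 2 + √(wedgeSq v' D) / ‖D‖ ^ 2)) ^ q := by
        refine Real.rpow_le_rpow (by positivity) ?_ hq.le
        refine h1.trans (le_of_le_of_eq (mul_le_mul_of_nonneg_left
          (add_le_add (hterm v hv) (hterm v' hv')) zero_le_two) ?_)
        ring
    _ = (2 * Λ / lam) ^ q * d ^ q *
          (√(wedgeSq v D) / ‖D‖ ^ 2 + √(wedgeSq v' D) / ‖D‖ ^ 2) ^ q := by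
        rw [Real.mul_rpow (by positivity) (by positivity),
          Real.mul_rpow (by positivity) (by positivity)]
    _ ≤ (2 * Λ / lam) ^ q * d ^ q * (2 ^ q * ((√(wedgeSq v D) / ‖D‖ ^ 2) ^ q +
          (√(wedgeSq v' D) / ‖D‖ ^ 2) ^ q)) := by
        gcongr
        exact add_rpow_le_two_rpow_mul (by positivity) (by positivity) hq.le
    _ = _ := by rw [hpow, hpow]; ring

lemma wedgeSq_sub_comm {n : ℕ} (a b c : EuclideanSpace ℝ (Fin n)) :
    wedgeSq a (b - c) = wedgeSq a (c - b) := by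
  rw [wedgeSq, wedgeSq, ← neg_sub c b, norm_neg, inner_neg_right, neg_sq]

lemma norm_sub_le_mul_circDist {n : ℕ} {u : ℝ → EuclideanSpace ℝ (Fin n)} {Λ : ℝ}
    (hu : Differentiable ℝ u) (hper : Function.Periodic u 1) (hΛ : ∀ x, ‖deriv u x‖ ≤ Λ)
    (x y : ℝ) : ‖u x - u y‖ ≤ Λ * circDist x y := by
  obtain ⟨k, hk⟩ := exists_circDist_eq x y
  rw [hk, ← periodic_add_intCast hper y k]
  exact Convex.norm_image_sub_le_of_norm_deriv_le (fun z _ => hu z) (fun z _ => hΛ z)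
    convex_univ (mem_univ _) (mem_univ _)

lemma circDist_eq_zero_of_embedded {n : ℕ} {u : ℝ → EuclideanSpace ℝ (Fin n)} (hu : Embedded u)
    {x y : ℝ} (h : u x = u y) : circDist x y = 0 := by
  rw [circDist, AddCircle.coe_sub, hu x y h, sub_self, norm_zero]

/-- The fractional seminorm of the tangent line field is controlled by the tangent-point energy. -/
lemma lintegral_line_field_le {n : ℕ} {q lam Λ : ℝ} (hq : 0 < q) (hlam : 0 < lam) (hΛ : 0 < Λ)
    {u : ℝ → EuclideanSpace ℝ (Fin n)} (hu : ContDiff ℝ 1 u) (hper : Function.Periodic u 1)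
    (hemb : Embedded u) (hlow : ∀ x, lam ≤ ‖deriv u x‖) (hup : ∀ x, ‖deriv u x‖ ≤ Λ)
    {τ : ℝ → EuclideanSpace ℝ (Fin n)} (hτ : τ = fun x => ‖deriv u x‖⁻¹ • deriv u x)
    (hτper : Function.Periodic τ 1) (hT : TPe q u < ⊤) :
    (∫⁻ p in unitSq, ENNReal.ofReal
      ((‖τ p.1 - τ p.2‖ * ‖τ p.1 + τ p.2‖) ^ q / circDist p.1 p.2 ^ q)) ≤
      ENNReal.ofReal (2 * ((2 * Λ / lam) ^ q * 2 ^ q) * q * (TPe q u).toReal) := by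
  set C := (2 * Λ / lam) ^ q * 2 ^ q with hC
  set T : ℝ × ℝ → ℝ := fun p =>
    wedgeSq (deriv u p.2) (u p.1 - u p.2) ^ (q / 2) / ‖u p.1 - u p.2‖ ^ (2 * q) with hTdef
  have hT0 : ∀ p, 0 ≤ T p := fun p => by
    have := wedgeSq_nonneg (deriv u p.2) (u p.1 - u p.2)
    simp only [hTdef]; positivity
  have hTm : Measurable T := by
    have h1 : Continuous (deriv u) := hu.continuous_deriv le_rfl
    have h2 : Continuous u := hu.continuous
    simp only [hTdef, wedgeSq]
    fun_prop
  have hTi : ∫⁻ p in unitSq, ENNReal.ofReal (T p) = ENNReal.ofReal (q * (TPe q u).toReal) := by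
    rw [ENNReal.ofReal_mul hq.le, ENNReal.ofReal_toReal hT.ne, TPe, ← mul_assoc,
      ← ENNReal.ofReal_mul hq.le, mul_one_div_cancel hq.ne', ENNReal.ofReal_one, one_mul]
  have hswap : ∫⁻ p in unitSq, ENNReal.ofReal (T p.swap) = ∫⁻ p in unitSq, ENNReal.ofReal (T p) := by
    rw [unitSq, Measure.volume_eq_prod, ← Measure.prod_restrict]
    exact lintegral_prod_swap (fun p => ENNReal.ofReal (T p))
  have hpt : ∀ p : ℝ × ℝ,
      (‖τ p.1 - τ p.2‖ * ‖τ p.1 + τ p.2‖) ^ q / circDist p.1 p.2 ^ q ≤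
        C * (T p.swap + T p) := by
    rintro ⟨x, y⟩
    rcases eq_or_ne (u x) (u y) with h | h
    · have h1 := hT0 (x, y)
      have h2 := hT0 (x, y).swap
      have := eq_of_circDist_eq_zero hτper (circDist_eq_zero_of_embedded hemb h)
      simp only [this, sub_self, norm_zero, zero_mul, Real.zero_rpow hq.ne', zero_div]
      positivity
    · have h1 := chord_quotient_le hq hlam hΛ (hlow x) (hlow y) (sub_ne_zero.2 h)
        (norm_sub_le_mul_circDist (hu.differentiable one_ne_zero) hper hup x y)
      simp only [hTdef, hτ, Prod.swap]
      rw [wedgeSq_sub_comm (deriv u x) (u y), norm_sub_rev (u y)]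
      exact h1
  calc _ ≤ ∫⁻ p in unitSq, ENNReal.ofReal C *
          (ENNReal.ofReal (T p.swap) + ENNReal.ofReal (T p)) := by
        refine lintegral_mono fun p => ?_
        rw [← ENNReal.ofReal_add (hT0 _) (hT0 _), ← ENNReal.ofReal_mul (by positivity)]
        exact ENNReal.ofReal_le_ofReal (hpt p)
    _ = ENNReal.ofReal C * (ENNReal.ofReal (q * (TPe q u).toReal) +
          ENNReal.ofReal (q * (TPe q u).toReal)) := by
        rw [lintegral_const_mul' _ _ ENNReal.ofReal_ne_top, lintegral_add_right _ (by fun_prop),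
          hswap, hTi]
    _ = _ := by
        rw [← ENNReal.ofReal_add (by positivity) (by positivity),
          ← ENNReal.ofReal_mul (by positivity)]
        congr 1; ring

/-- Necessary regularity for finite energy: if `TP(u) < ∞` then the
unit tangent lies in `W^{1-1/q,q}` with
`[u'/|u'|]_{W^{1-1/q,q}}^q ≤ C (TP(u) + TP(u)^{(q-1)/(q-2)})`, where `C` depends only
on `‖u'‖_{L^∞}` (bounded by `Λ`), `min |u'|` (bounded below by `lam`) and `q`. -/
theorem unit_tangent_seminorm_bound (n : ℕ) (q lam Λ : ℝ) (hq : 2 < q)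
    (hlam : 0 < lam) :
    ∃ C : ℝ, 0 < C ∧ ∀ u : ℝ → EuclideanSpace ℝ (Fin n),
      ContDiff ℝ 1 u → Function.Periodic u 1 → Embedded u →
      (∀ x, lam ≤ ‖deriv u x‖) → (∀ x, ‖deriv u x‖ ≤ Λ) →
      TPe q u < ⊤ →
      sobSemPow (1 - 1 / q) q (fun x => ‖deriv u x‖⁻¹ • deriv u x) ≤
        ENNReal.ofReal (C * ((TPe q u).toReal + (TPe q u).toReal ^ ((q - 1) / (q - 2)))) := by
  rcases lt_or_ge 0 Λ with hΛ | hΛ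
  · obtain ⟨c, hc, H⟩ := lintegral_seminorm_le_of_line_field hq
    have hq0 : 0 < q := by linarith
    set K := 2 * ((2 * Λ / lam) ^ q * 2 ^ q) * q with hK
    have hK0 : 0 < K := by positivity
    refine ⟨K + c * K ^ ((q - 1) / (q - 2)), by positivity,
      fun u hu hper hemb hlow hup hT => ?_⟩
    set τ : ℝ → EuclideanSpace ℝ (Fin n) := fun x => ‖deriv u x‖⁻¹ • deriv u x with hτ
    have hne : ∀ x, ‖deriv u x‖ ≠ 0 := fun x => (hlam.trans_le (hlow x)).ne'
    have hdper : Function.Periodic (deriv u) 1 := fun x => by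
      rw [← deriv_comp_add_const, hper.funext]
    have hτper : Function.Periodic τ 1 := fun x => by simp only [hτ, hdper x]
    have hdc : Continuous (deriv u) := hu.continuous_deriv le_rfl
    have hτc : Continuous τ := (hdc.norm.inv₀ hne).smul hdc
    have hτ1 : ∀ x, ‖τ x‖ = 1 := fun x => by
      simp only [hτ]
      rw [norm_smul, norm_inv, norm_norm, inv_mul_cancel₀ (hne x)]
    have hexp : 1 + (1 - 1 / q) * q = q := by field_simp; ring
    have hT0 : 0 ≤ (TPe q u).toReal := ENNReal.toReal_nonneg
    have h := H n τ (K * (TPe q u).toReal) hτc hτper hτ1 (by positivity)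
      (lintegral_line_field_le hq0 hlam hΛ hu hper hemb hlow hup hτ hτper hT)
    rw [sobSemPow, hexp]
    refine h.trans (ENNReal.ofReal_le_ofReal ?_)
    rw [Real.mul_rpow hK0.le hT0]
    have e1 : 0 ≤ K * (TPe q u).toReal ^ ((q - 1) / (q - 2)) := by positivity
    have e2 : 0 ≤ c * K ^ ((q - 1) / (q - 2)) * (TPe q u).toReal := by positivity
    linarith
  · refine ⟨1, one_pos, fun u _ _ _ hlow hup _ => ?_⟩
    linarith [hlow 0, hup 0]
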